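/- Closed differential inequality with the fourth-order dissipation rate (the inequality preceding (pf:ene-low-10) in the proof of Lemma 3.2): let β ≥ 1, δ = μ̲/(16β²) with μ̲ = min{μ,1}, and let ξ ≠ 0 satisfy |ξ| ≤ 2β/ε. Then every solution (â, û) of the Fourier-transformed linearized system with forcing (f̂, ĝ) satisfies, for all t ≥ 0, (1/2)·d/dt V(t)² + (δ/3)·κ·V(t)² ≤ 4·√(Ω²ε² + |ξ|²)·|(f̂(t), ĝ(t))|·V(t), where V(t) is the nonnegative square root of V(t)² = (Ω²ε² + |ξ|²)·|(â(t), û(t))|² + 2δ|ξ|²·Re⟨iε â(t) ξ, û(t)⟩ and κ = |ξ|⁴/(Ω²ε² + |ξ|²). -/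

import Mathlib

noncomputable section
open scoped BigOperators

/-- Hermitian inner product on `ℂ³`: `⟨v,w⟩ = ∑ₖ vₖ · conj(wₖ)`. -/
def hinner (v w : Fin 3 → ℂ) : ℂ := ∑ k, v k * (starRingEnd ℂ) (w k)

/-- Squared norm `‖w‖² = ∑ₖ |wₖ|²` on `ℂ³`. -/
def vnormSq (w : Fin 3 → ℂ) : ℝ := ∑ k, ‖w k‖ ^ 2

/-- Norm `‖w‖` on `ℂ³`. -/
def vnorm (w : Fin 3 → ℂ) : ℝ := Real.sqrt (vnormSq w)

/-- `|(z,w)| = √(|z|² + ‖w‖²)` for `z ∈ ℂ`, `w ∈ ℂ³`. -/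
def pairNorm (z : ℂ) (w : Fin 3 → ℂ) : ℝ := Real.sqrt (‖z‖ ^ 2 + vnormSq w)

/-- Cross product with `e₃ = (0,0,1)`: `e₃ × w = (−w₂, w₁, 0)`. -/
def cross3 (w : Fin 3 → ℂ) : Fin 3 → ℂ := ![-(w 1), w 0, 0]

/-- `|ξ|² = ∑ₖ ξₖ²` for `ξ ∈ ℝ³`. -/
def xiNormSq (ξ : Fin 3 → ℝ) : ℝ := ∑ k, (ξ k) ^ 2

/-- Euclidean norm `|ξ|` for `ξ ∈ ℝ³`. -/
def xiNorm (ξ : Fin 3 → ℝ) : ℝ := Real.sqrt (xiNormSq ξ)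

/-- `ξ·w = ∑ₖ ξₖ wₖ` for `ξ ∈ ℝ³` regarded in `ℂ³` and `w ∈ ℂ³`. -/
def xiDot (ξ : Fin 3 → ℝ) (w : Fin 3 → ℂ) : ℂ := ∑ k, (ξ k : ℂ) * w k

/-- The Fourier-transformed linearized compressible Navier–Stokes–Coriolis system
at time `t` with data `(â, û)`, derivatives `(â', û')` and forcing `(f̂, ĝ)`:
`â′ + (i/ε)(ξ·û) = f̂` and
`û′ + μ|ξ|²û + (μ+μ′)(ξ·û)ξ + Ω(e₃ × û) + (i/ε)âξ = ĝ`. -/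
def SystemAt (μ μ' ε Ω : ℝ) (ξ : Fin 3 → ℝ)
    (a a' : ℝ → ℂ) (u u' : ℝ → Fin 3 → ℂ)
    (f : ℝ → ℂ) (g : ℝ → Fin 3 → ℂ) (t : ℝ) : Prop :=
  (a' t + (Complex.I / (ε : ℂ)) * xiDot ξ (u t) = f t) ∧
  (∀ k, u' t k + ((μ * xiNormSq ξ : ℝ) : ℂ) * u t k
      + (((μ + μ') : ℝ) : ℂ) * xiDot ξ (u t) * (ξ k : ℂ)
      + ((Ω : ℝ) : ℂ) * cross3 (u t) k
      + (Complex.I / (ε : ℂ)) * a t * (ξ k : ℂ) = g t k)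

/-- `κ(|ξ|, Ωε) = |ξ|⁴/(Ω²ε² + |ξ|²)`. -/
def kappa (Ω ε : ℝ) (ξ : Fin 3 → ℝ) : ℝ :=
  xiNorm ξ ^ 4 / (Ω ^ 2 * ε ^ 2 + xiNorm ξ ^ 2)

lemma aux_vnormSq_nonneg (w : Fin 3 → ℂ) : 0 ≤ vnormSq w := by
  unfold vnormSq; positivity

lemma aux_vnorm_sq (w : Fin 3 → ℂ) : vnorm w ^ 2 = vnormSq w :=
  Real.sq_sqrt (aux_vnormSq_nonneg w)

lemma aux_xiNormSq_nonneg (ξ : Fin 3 → ℝ) : 0 ≤ xiNormSq ξ := by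
  unfold xiNormSq; positivity

lemma aux_xiNorm_sq (ξ : Fin 3 → ℝ) : xiNorm ξ ^ 2 = xiNormSq ξ :=
  Real.sq_sqrt (aux_xiNormSq_nonneg ξ)

lemma aux_pairNorm_sq (z : ℂ) (w : Fin 3 → ℂ) : pairNorm z w ^ 2 = ‖z‖ ^ 2 + vnormSq w :=
  Real.sq_sqrt (add_nonneg (by positivity) (aux_vnormSq_nonneg w))

lemma aux_cs (v w : Fin 3 → ℂ) : ‖hinner v w‖ ≤ vnorm v * vnorm w := by
  have h1 : ‖hinner v w‖ ≤ ∑ k, ‖v k‖ * ‖w k‖ := by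
    unfold hinner
    refine (norm_sum_le _ _).trans (le_of_eq ?_)
    simp
  refine h1.trans ?_
  unfold vnorm vnormSq
  exact Real.sum_mul_le_sqrt_mul_sqrt _ _ _

lemma aux_xiDot (ξ : Fin 3 → ℝ) (w : Fin 3 → ℂ) : ‖xiDot ξ w‖ ≤ xiNorm ξ * vnorm w := by
  have h1 : ‖xiDot ξ w‖ ≤ ∑ k, |ξ k| * ‖w k‖ := by
    unfold xiDot
    refine (norm_sum_le _ _).trans (le_of_eq ?_)
    simp
  refine h1.trans ?_
  have := Real.sum_mul_le_sqrt_mul_sqrt Finset.univ (fun k => |ξ k|) (fun k => ‖w k‖)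
  simpa [xiNorm, xiNormSq, vnorm, vnormSq] using this

lemma aux_cross (w : Fin 3 → ℂ) : vnorm (cross3 w) ≤ vnorm w := by
  unfold vnorm
  apply Real.sqrt_le_sqrt
  simp [vnormSq, cross3, Fin.sum_univ_three]
  nlinarith [sq_nonneg ‖w 2‖]

lemma aux_energy (μ ν e Ω : ℝ) (ξ : Fin 3 → ℝ) (a a' f : ℂ) (u u' g : Fin 3 → ℂ)
    (h1 : a' + (Complex.I * (e : ℂ)) * xiDot ξ u = f)
    (h2 : ∀ k, u' k + ((μ * xiNormSq ξ : ℝ) : ℂ) * u k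
      + (ν : ℂ) * xiDot ξ u * (ξ k : ℂ)
      + ((Ω : ℝ) : ℂ) * cross3 u k
      + (Complex.I * (e : ℂ)) * a * (ξ k : ℂ) = g k) :
    (a' * (starRingEnd ℂ) a).re + (hinner u' u).re
      = - (μ * xiNormSq ξ * vnormSq u) - ν * ‖xiDot ξ u‖ ^ 2
        + (f * (starRingEnd ℂ) a).re + (hinner g u).re := by
  have h20 := h2 0
  have h21 := h2 1
  have h22 := h2 2
  simp only [hinner, Fin.sum_univ_three, ← h1, ← h20, ← h21, ← h22, vnormSq, Complex.sq_norm,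
    Complex.normSq_apply]
  generalize xiNormSq ξ = r
  simp [xiDot, Fin.sum_univ_three, cross3]
  ring

lemma aux_H (μ ν e ε Ω : ℝ) (he : ε * e = 1) (hν : μ + ν = 1)
    (ξ : Fin 3 → ℝ) (a a' f : ℂ) (u u' g : Fin 3 → ℂ)
    (h1 : a' + (Complex.I * (e : ℂ)) * xiDot ξ u = f)
    (h2 : ∀ k, u' k + ((μ * xiNormSq ξ : ℝ) : ℂ) * u k
      + (ν : ℂ) * xiDot ξ u * (ξ k : ℂ)
      + ((Ω : ℝ) : ℂ) * cross3 u k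
      + (Complex.I * (e : ℂ)) * a * (ξ k : ℂ) = g k) :
    (Complex.I * ε * (a' * (starRingEnd ℂ) (xiDot ξ u) + a * (starRingEnd ℂ) (xiDot ξ u'))).re
      = ‖xiDot ξ u‖ ^ 2 - xiNormSq ξ * ‖a‖ ^ 2
        - xiNormSq ξ * (Complex.I * ε * (a * (starRingEnd ℂ) (xiDot ξ u))).re
        - Ω * (Complex.I * ε * (a * (starRingEnd ℂ) (xiDot ξ (cross3 u)))).re
        + (Complex.I * ε * (f * (starRingEnd ℂ) (xiDot ξ u))).re
        + (Complex.I * ε * (a * (starRingEnd ℂ) (xiDot ξ g))).re := by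
  have hu : xiDot ξ u' = xiDot ξ g - (xiNormSq ξ : ℂ) * xiDot ξ u - Ω * xiDot ξ (cross3 u)
      - Complex.I * e * a * (xiNormSq ξ : ℂ) := by
    have hr : (xiNormSq ξ : ℂ) = ξ 0 ^ 2 + ξ 1 ^ 2 + ξ 2 ^ 2 := by
      simp [xiNormSq, Fin.sum_univ_three]
    have hg : xiDot ξ g = xiDot ξ u' + (μ * xiNormSq ξ : ℂ) * xiDot ξ u
        + ν * xiDot ξ u * (xiNormSq ξ : ℂ) + Ω * xiDot ξ (cross3 u)
        + Complex.I * e * a * (xiNormSq ξ : ℂ) := by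
      have : xiDot ξ g = ξ 0 * g 0 + ξ 1 * g 1 + ξ 2 * g 2 := by
        simp [xiDot, Fin.sum_univ_three]
      rw [this, ← h2 0, ← h2 1, ← h2 2]
      have e1 : ∀ w, xiDot ξ w = ξ 0 * w 0 + ξ 1 * w 1 + ξ 2 * w 2 := by
        intro w; simp [xiDot, Fin.sum_univ_three]
      rw [e1 u', e1 (cross3 u)]
      generalize hd : xiDot ξ u = d
      push_cast
      rw [e1] at hd
      rw [hr]
      linear_combination (μ * (ξ 0 ^ 2 + ξ 1 ^ 2 + ξ 2 ^ 2) : ℂ) * hd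
    have hν' : (μ : ℂ) + ν = 1 := by exact_mod_cast hν
    linear_combination -hg - (xiNormSq ξ : ℂ) * xiDot ξ u * hν'
  have ha : a' = f - (Complex.I * (e : ℂ)) * xiDot ξ u := by
    linear_combination h1
  rw [hu, ha]
  generalize xiDot ξ u = d
  generalize xiDot ξ g = G
  generalize xiDot ξ (cross3 u) = C
  generalize xiNormSq ξ = r
  simp only [Complex.sq_norm, Complex.normSq_apply]
  simp
  linear_combination (d.re * d.re + d.im * d.im - r * (a.re * a.re + a.im * a.im)) * he

lemma aux_reb (ε : ℝ) (hε : 0 < ε) (a d : ℂ) :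
    |(Complex.I * ε * (a * (starRingEnd ℂ) d)).re| ≤ ε * (‖a‖ * ‖d‖) := by
  refine (Complex.abs_re_le_norm _).trans (le_of_eq ?_)
  simp [abs_of_pos hε]

lemma aux_hinner (ε : ℝ) (ξ : Fin 3 → ℝ) (a : ℂ) (u : Fin 3 → ℂ) :
    hinner (fun k => Complex.I * (ε : ℂ) * a * (ξ k : ℂ)) u
      = Complex.I * ε * (a * (starRingEnd ℂ) (xiDot ξ u)) := by
  simp [hinner, xiDot, Fin.sum_univ_three]; ring

lemma aux_deriv (B c ε : ℝ) (ξ : Fin 3 → ℝ) (a : ℝ → ℂ) (u : ℝ → Fin 3 → ℂ) (a' : ℂ)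
    (u' : Fin 3 → ℂ) (t : ℝ) (ha : HasDerivAt a a' t) (hu : HasDerivAt u u' t) :
    HasDerivAt (fun s => B * pairNorm (a s) (u s) ^ 2
          + c * (hinner (fun k => Complex.I * (ε : ℂ) * a s * (ξ k : ℂ)) (u s)).re)
      (B * (2 * ((a' * (starRingEnd ℂ) (a t)).re + (hinner u' (u t)).re))
        + c * (Complex.I * ε * (a' * (starRingEnd ℂ) (xiDot ξ (u t))
            + a t * (starRingEnd ℂ) (xiDot ξ u'))).re) t := by
  simp only [aux_pairNorm_sq, aux_hinner]
  have huk : ∀ k, HasDerivAt (fun s => u s k) (u' k) t := hasDerivAt_pi.1 hu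
  have hn : ∀ (z : ℝ → ℂ) (z' : ℂ), HasDerivAt z z' t →
      HasDerivAt (fun s => ‖z s‖ ^ 2) (2 * (z' * (starRingEnd ℂ) (z t)).re) t := by
    intro z z' hz
    have := hz.norm_sq
    rwa [Complex.inner] at this
  have hd : HasDerivAt (fun s => xiDot ξ (u s)) (xiDot ξ u') t := by
    unfold xiDot
    exact HasDerivAt.fun_sum fun k _ => (huk k).const_mul _
  have hv : HasDerivAt (fun s => vnormSq (u s)) (2 * (hinner u' (u t)).re) t := by
    unfold vnormSq hinner
    rw [Complex.re_sum, Finset.mul_sum]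
    exact HasDerivAt.fun_sum fun k _ => hn _ _ (huk k)
  have hH : HasDerivAt (fun s => (Complex.I * ε * (a s * (starRingEnd ℂ) (xiDot ξ (u s)))).re)
      ((Complex.I * ε * (a' * (starRingEnd ℂ) (xiDot ξ (u t))
            + a t * (starRingEnd ℂ) (xiDot ξ u'))).re) t := by
    have h := (ha.mul hd.star).const_mul (Complex.I * (ε : ℂ))
    exact Complex.reCLM.hasFDerivAt.comp_hasDerivAt t h
  have := (((hn a a' ha).add hv).const_mul B).add (hH.const_mul c)
  exact this.congr_deriv (by ring)

/-- The purely real inequality. -/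
lemma aux_real (m δ β ε Ω s B x y F G P Q V2 H dn E W fa gu hd ag : ℝ)
    (hs : 0 < s) (hβ : 1 ≤ β) (hε : 0 < ε) (hδ0 : 0 < δ) (hm : m = 16 * β ^ 2 * δ) (hm1 : m ≤ 1)
    (hB : B = Ω ^ 2 * ε ^ 2 + s ^ 2) (hse : ε * s ≤ 2 * β)
    (hx : 0 ≤ x) (hy : 0 ≤ y) (hF : 0 ≤ F) (hG : 0 ≤ G)
    (hP : P ^ 2 = x ^ 2 + y ^ 2) (hP0 : 0 ≤ P) (hQ : Q ^ 2 = F ^ 2 + G ^ 2) (hQ0 : 0 ≤ Q)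
    (hV : V2 = B * P ^ 2 + 2 * δ * s ^ 2 * H) (hH : |H| ≤ ε * (x * (s * y)))
    (hdn0 : 0 ≤ dn) (hdn : dn ≤ s * y)
    (hE : E ≤ - (m * s ^ 2 * y ^ 2) + fa + gu)
    (hfa : fa ≤ F * x) (hgu : gu ≤ G * y)
    (hW : |W| ≤ ε * (x * (s * y))) (hhd : hd ≤ ε * (F * (s * y))) (hag : ag ≤ ε * (x * (s * G))) :
    B * E + δ * s ^ 2 * (dn ^ 2 - s ^ 2 * x ^ 2 - s ^ 2 * H - Ω * W + hd + ag)
      + δ / 3 * (s ^ 4 / B) * V2 ≤ 4 * √B * Q * √V2 := by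
  have hBs : s ^ 2 ≤ B := by rw [hB]; nlinarith [sq_nonneg (Ω * ε)]
  have hB0 : 0 < B := lt_of_lt_of_le (by positivity) hBs
  have hβ2 : (1 : ℝ) ≤ β ^ 2 := by nlinarith
  have hsmall : δ * (ε * s) ≤ 1 / 8 := by
    have h1 : δ * (ε * s) ≤ δ * (2 * β) := by gcongr
    have h2 : δ * (2 * β) ≤ δ * (2 * β ^ 2) := by
      have hbb : β ≤ β ^ 2 := by nlinarith only [hβ]
      gcongr
    linarith
  have hxy : x * y ≤ P ^ 2 / 2 := by nlinarith only [hP, sq_nonneg (x - y)]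
  have hHb : 2 * δ * s ^ 2 * |H| ≤ B * P ^ 2 / 8 := by
    calc 2 * δ * s ^ 2 * |H| ≤ 2 * δ * s ^ 2 * (ε * (x * (s * y))) := by gcongr
      _ = 2 * (δ * (ε * s)) * s ^ 2 * (x * y) := by ring
      _ ≤ 2 * (1 / 8) * B * (P ^ 2 / 2) := by gcongr
      _ = B * P ^ 2 / 8 := by ring
  have hc : 0 < 2 * δ * s ^ 2 := by positivity
  have hVu : V2 ≤ 9 / 8 * (B * P ^ 2) := by
    have := mul_le_mul_of_nonneg_left (le_abs_self H) hc.le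
    linarith
  have hVl : 7 / 8 * (B * P ^ 2) ≤ V2 := by
    have := mul_le_mul_of_nonneg_left (neg_abs_le H) hc.le
    linarith
  -- forcing
  have hCS : F * x + G * y ≤ Q * P := by
    apply abs_le_of_sq_le_sq' _ (by positivity) |>.2
    rw [mul_pow, hP, hQ]; nlinarith only [sq_nonneg (F * y - G * x)]
  have hCS2 : F * y + G * x ≤ Q * P := by
    apply abs_le_of_sq_le_sq' _ (by positivity) |>.2
    rw [mul_pow, hP, hQ]; nlinarith only [sq_nonneg (F * x - G * y)]
  have hforce : B * (fa + gu) + δ * s ^ 2 * (hd + ag) ≤ 9 / 8 * (B * (Q * P)) := by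
    have h1 : B * (fa + gu) ≤ B * (Q * P) := by gcongr; linarith
    have h2 : δ * s ^ 2 * (hd + ag) ≤ B * (Q * P) / 8 := by
      calc δ * s ^ 2 * (hd + ag) ≤ δ * s ^ 2 * (ε * (F * (s * y)) + ε * (x * (s * G))) := by gcongr
        _ = (δ * (ε * s)) * s ^ 2 * (F * y + G * x) := by ring
        _ ≤ (1 / 8) * B * (Q * P) := by gcongr
        _ = _ := by ring
    linarith
  have hroot : √B * P ≤ 2 * √V2 := by
    have h1 : √B * P = √(B * P ^ 2) := by
      rw [Real.sqrt_mul hB0.le, Real.sqrt_sq hP0]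
    have h2 : 2 * √V2 = √(4 * V2) := by
      rw [Real.sqrt_mul (by norm_num)]
      congr 1
      rw [show (4 : ℝ) = 2 ^ 2 by norm_num, Real.sqrt_sq (by norm_num)]
    rw [h1, h2]
    apply Real.sqrt_le_sqrt
    have : 0 ≤ B * P ^ 2 := by positivity
    linarith
  have hfin : 9 / 8 * (B * (Q * P)) ≤ 4 * √B * Q * √V2 := by
    have hb : B = √B * √B := (Real.mul_self_sqrt hB0.le).symm
    calc 9 / 8 * (B * (Q * P)) = 9 / 8 * (√B * Q * (√B * P)) := by
          conv_lhs => rw [hb]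
          ring
      _ ≤ 9 / 8 * (√B * Q * (2 * √V2)) := by gcongr
      _ ≤ 4 * √B * Q * √V2 := by
          have : 0 ≤ √B * Q * √V2 := by positivity
          linarith
  -- dissipation
  have hk : δ / 3 * (s ^ 4 / B) * V2 ≤ 3 / 8 * δ * s ^ 4 * P ^ 2 := by
    calc δ / 3 * (s ^ 4 / B) * V2 ≤ δ / 3 * (s ^ 4 / B) * (9 / 8 * (B * P ^ 2)) := by gcongr
      _ = _ := by field_simp; ring
  have hd2 : dn ^ 2 ≤ s ^ 2 * y ^ 2 := by rw [← mul_pow]; gcongr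
  have hHd : -(s ^ 2 * H) ≤ s ^ 2 * (x ^ 2 / 4 + 4 * β ^ 2 * y ^ 2) := by
    have h1 : -H ≤ ε * (x * (s * y)) := (neg_le_abs H).trans hH
    have h2 : ε * (x * (s * y)) ≤ 2 * β * (x * y) := by
      calc ε * (x * (s * y)) = (ε * s) * (x * y) := by ring
        _ ≤ _ := by gcongr
    have h3 : -H ≤ x ^ 2 / 4 + 4 * β ^ 2 * y ^ 2 := by nlinarith only [h1, h2, sq_nonneg (x / 2 - 2 * β * y)]
    calc -(s ^ 2 * H) = s ^ 2 * (-H) := by ring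
      _ ≤ _ := by gcongr
  have hWd : -(Ω * W) ≤ s ^ 2 * x ^ 2 / 4 + B * y ^ 2 := by
    have h1 : -(Ω * W) ≤ |Ω| * (ε * (x * (s * y))) := by
      refine (neg_le_abs _).trans ?_
      rw [abs_mul]; gcongr
    have h2 : (|Ω| * ε * y) ^ 2 ≤ B * y ^ 2 := by
      rw [mul_pow, mul_pow, sq_abs]; gcongr; rw [hB]; linarith [sq_nonneg s]
    nlinarith only [h1, h2, sq_nonneg (s * x / 2 - |Ω| * ε * y)]
  have hBE : B * E ≤ B * (fa + gu) - 16 * β ^ 2 * δ * B * s ^ 2 * y ^ 2 := by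
    have := mul_le_mul_of_nonneg_left hE hB0.le
    rw [hm] at this
    linarith
  have key : dn ^ 2 - s ^ 2 * x ^ 2 - s ^ 2 * H - Ω * W + 3 / 8 * s ^ 2 * P ^ 2
      ≤ 16 * β ^ 2 * B * y ^ 2 := by
    have h1 : s ^ 2 * y ^ 2 ≤ β ^ 2 * B * y ^ 2 := by gcongr; nlinarith only [hβ2, hBs, hB0]
    have h2 : β ^ 2 * (s ^ 2 * y ^ 2) ≤ β ^ 2 * (B * y ^ 2) := by gcongr
    have h3 : B * y ^ 2 ≤ β ^ 2 * B * y ^ 2 := by gcongr; nlinarith only [hβ2, hB0]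
    have h4 : 0 ≤ s ^ 2 * x ^ 2 := by positivity
    have h5 : 0 ≤ B * y ^ 2 := by positivity
    rw [hP]
    nlinarith only [h1, h2, h3, h4, h5, hd2, hHd, hWd]
  have key2 := mul_le_mul_of_nonneg_left key (show 0 ≤ δ * s ^ 2 by positivity)
  linarith

/-- Closed differential inequality with the fourth-order dissipation rate (the inequality
preceding (pf:ene-low-10) in the proof of Lemma 3.2): with `δ = μ̲/(16β²)`, `ξ ≠ 0`,
`|ξ| ≤ 2β/ε`, `V = √(V²)` and `κ = |ξ|⁴/(Ω²ε² + |ξ|²)`,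
`(1/2) d/dt V² + (δ/3)κV² ≤ 4√(Ω²ε² + |ξ|²)·|(f̂,ĝ)|·V`. -/
theorem modified_energy_closed_inequality
    (μ μ' ε Ω β : ℝ) (hμ : 0 < μ) (hμ' : 2 * μ + μ' = 1) (hε : 0 < ε) (hβ : 1 ≤ β)
    (δ : ℝ) (hδ : δ = min μ 1 / (16 * β ^ 2))
    (ξ : Fin 3 → ℝ) (hξ0 : ξ ≠ 0) (hξ : xiNorm ξ ≤ 2 * β / ε)
    (a a' f : ℝ → ℂ) (u u' g : ℝ → Fin 3 → ℂ)
    (ha : ∀ t : ℝ, 0 ≤ t → HasDerivAt a (a' t) t)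
    (hu : ∀ t : ℝ, 0 ≤ t → HasDerivAt u (u' t) t)
    (hf : ContinuousOn f (Set.Ici 0))
    (hg : ContinuousOn g (Set.Ici 0))
    (hsys : ∀ t : ℝ, 0 ≤ t → SystemAt μ μ' ε Ω ξ a a' u u' f g t) :
    ∀ t : ℝ, 0 ≤ t → ∀ D : ℝ,
      HasDerivAt
        (fun s => (Ω ^ 2 * ε ^ 2 + xiNormSq ξ) * pairNorm (a s) (u s) ^ 2
          + 2 * δ * xiNormSq ξ
              * (hinner (fun k => Complex.I * (ε : ℂ) * a s * (ξ k : ℂ)) (u s)).re) D t →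
      (1 / 2) * D
          + (δ / 3) * kappa Ω ε ξ
              * ((Ω ^ 2 * ε ^ 2 + xiNormSq ξ) * pairNorm (a t) (u t) ^ 2
                + 2 * δ * xiNormSq ξ
                    * (hinner (fun k => Complex.I * (ε : ℂ) * a t * (ξ k : ℂ)) (u t)).re)
        ≤ 4 * Real.sqrt (Ω ^ 2 * ε ^ 2 + xiNormSq ξ) * pairNorm (f t) (g t)
            * Real.sqrt ((Ω ^ 2 * ε ^ 2 + xiNormSq ξ) * pairNorm (a t) (u t) ^ 2
                + 2 * δ * xiNormSq ξ
                    * (hinner (fun k => Complex.I * (ε : ℂ) * a t * (ξ k : ℂ)) (u t)).re) := by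
  intro t ht D hD
  have hmin : 0 < min μ 1 := lt_min hμ one_pos
  have hβ0 : 0 < β := by linarith
  have hδ0 : 0 < δ := by rw [hδ]; positivity
  have hs : 0 < xiNorm ξ := by
    apply Real.sqrt_pos.2
    refine lt_of_le_of_ne (aux_xiNormSq_nonneg ξ) (fun h => hξ0 ?_)
    have h' := (Finset.sum_eq_zero_iff_of_nonneg (fun k _ => sq_nonneg (ξ k))).1 h.symm
    funext k
    simpa using h' k (Finset.mem_univ k)
  obtain ⟨h1, h2⟩ := hsys t ht
  rw [div_eq_mul_inv, ← Complex.ofReal_inv] at h1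
  simp only [div_eq_mul_inv, ← Complex.ofReal_inv] at h2
  have hDeq := hD.unique (aux_deriv _ _ ε ξ a u (a' t) (u' t) t (ha t ht) (hu t ht))
  have hE := aux_energy μ (μ + μ') ε⁻¹ Ω ξ _ _ _ _ _ _ h1 h2
  have hH := aux_H μ (μ + μ') ε⁻¹ ε Ω (mul_inv_cancel₀ hε.ne') (by linarith) ξ _ _ _ _ _ _ h1 h2
  rw [hH] at hDeq
  have hdn := aux_xiDot ξ (u t)
  have hdc : ‖xiDot ξ (cross3 (u t))‖ ≤ xiNorm ξ * vnorm (u t) :=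
    (aux_xiDot ξ _).trans (mul_le_mul_of_nonneg_left (aux_cross _) hs.le)
  have hdg := aux_xiDot ξ (g t)
  have hvu : 0 ≤ vnorm (u t) := Real.sqrt_nonneg _
  have hvg : 0 ≤ vnorm (g t) := Real.sqrt_nonneg _
  have hdn2 : ‖xiDot ξ (u t)‖ ^ 2 ≤ xiNorm ξ ^ 2 * vnorm (u t) ^ 2 := by
    rw [← mul_pow]; gcongr
  have main := aux_real (min μ 1) δ β ε Ω (xiNorm ξ) (Ω ^ 2 * ε ^ 2 + xiNormSq ξ) ‖a t‖
    (vnorm (u t)) ‖f t‖ (vnorm (g t)) (pairNorm (a t) (u t)) (pairNorm (f t) (g t)) _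
    (Complex.I * ε * (a t * (starRingEnd ℂ) (xiDot ξ (u t)))).re ‖xiDot ξ (u t)‖
    ((a' t * (starRingEnd ℂ) (a t)).re + (hinner (u' t) (u t)).re)
    (Complex.I * ε * (a t * (starRingEnd ℂ) (xiDot ξ (cross3 (u t))))).re
    (f t * (starRingEnd ℂ) (a t)).re (hinner (g t) (u t)).re
    (Complex.I * ε * (f t * (starRingEnd ℂ) (xiDot ξ (u t)))).re
    (Complex.I * ε * (a t * (starRingEnd ℂ) (xiDot ξ (g t)))).re
    hs hβ hε hδ0 (by rw [hδ]; field_simp) (min_le_right _ _)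
    (by rw [aux_xiNorm_sq]) (by rw [le_div_iff₀ hε] at hξ; linarith)
    (norm_nonneg _) hvu (norm_nonneg _) hvg
    (by rw [aux_pairNorm_sq, aux_vnorm_sq]) (Real.sqrt_nonneg _)
    (by rw [aux_pairNorm_sq, aux_vnorm_sq]) (Real.sqrt_nonneg _) rfl
    ((aux_reb ε hε _ _).trans (by gcongr)) (norm_nonneg _) hdn
    (by
      rw [hE, ← aux_vnorm_sq, ← aux_xiNorm_sq]
      have h0 : 0 ≤ ‖xiDot ξ (u t)‖ ^ 2 := by positivity
      have : min μ 1 * (xiNorm ξ ^ 2 * vnorm (u t) ^ 2)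
          ≤ μ * (xiNorm ξ ^ 2 * vnorm (u t) ^ 2) + (μ + μ') * ‖xiDot ξ (u t)‖ ^ 2 := by
        rw [show μ + μ' = 1 - μ by linarith]
        rcases le_total μ 1 with h | h
        · rw [min_eq_left h]; nlinarith
        · rw [min_eq_right h]; nlinarith
      linarith)
    ((Complex.re_le_norm _).trans (by simp))
    ((Complex.re_le_norm _).trans (aux_cs _ _))
    ((aux_reb ε hε _ _).trans (by gcongr))
    ((le_abs_self _).trans ((aux_reb ε hε _ _).trans (by gcongr)))
    ((le_abs_self _).trans ((aux_reb ε hε _ _).trans (by gcongr)))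
  rw [aux_hinner, kappa, hDeq]
  rw [show xiNorm ξ ^ 4 = (xiNorm ξ ^ 2) ^ 2 by ring] at main ⊢
  rw [aux_xiNorm_sq] at main ⊢
  refine le_trans (le_of_eq ?_) main
  ring
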